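/- arXiv:math/0007189 — 12 statements merged into one kernel-verified Lean document; each statement's English description precedes it below -/
import Mathlib

section
/- Let L ⊆ E be a Lagrangian subspace and suppose the symmetric quadrilinear form S satisfies S(x₁,x₂,x₃,x₄) = 0 whenever x₁ ∈ L. Then for all e,e',f,f' ∈ E: the image of S_{e,e'} is contained in L, S_{e,e'} vanishes on L, S_{e,e'} ∘ S_{f,f'} = 0, and S satisfies the invariance condition. -/
/-- If `L ⊆ E` is Lagrangian and the symmetric quadrilinear form `S` vanishes whenever
its first argument lies in `L`, then all operators `S_{e,e'}` have image in `L`, vanish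
on `L`, satisfy `S_{e,e'} ∘ S_{f,f'} = 0`, and `S` satisfies the invariance condition. -/
theorem stmt_2 (E : Type*) [AddCommGroup E] [Module ℂ E] [FiniteDimensional ℂ E]
    (ω : E →ₗ[ℂ] E →ₗ[ℂ] ℂ)
    (hω_alt : ∀ x : E, ω x x = 0)
    (hω_nd : ∀ x : E, (∀ y : E, ω x y = 0) → x = 0)
    (S : E → E → E → E → ℂ)
    (hS_lin : ∀ y z w : E, IsLinearMap ℂ (fun x => S x y z w))
    (hS_symm : ∀ (v : Fin 4 → E) (σ : Equiv.Perm (Fin 4)),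
      S (v (σ 0)) (v (σ 1)) (v (σ 2)) (v (σ 3)) = S (v 0) (v 1) (v 2) (v 3))
    (Sop : E → E → E →ₗ[ℂ] E)
    (hSop : ∀ e e' x y : E, ω (Sop e e' x) y = S e e' x y)
    (L : Submodule ℂ E)
    (hL_isotropic : ∀ x ∈ L, ∀ y ∈ L, ω x y = 0)
    (hL_dim : Module.finrank ℂ L = Module.finrank ℂ E / 2)
    (hvan : ∀ x₁ x₂ x₃ x₄ : E, x₁ ∈ L → S x₁ x₂ x₃ x₄ = 0) :
    (∀ e e' : E, ∀ x : E, Sop e e' x ∈ L) ∧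
    (∀ e e' : E, ∀ x ∈ L, Sop e e' x = 0) ∧
    (∀ e e' f f' : E, (Sop e e') ∘ₗ (Sop f f') = 0) ∧
    (∀ e e' x₁ x₂ x₃ x₄ : E,
      S (Sop e e' x₁) x₂ x₃ x₄ + S x₁ (Sop e e' x₂) x₃ x₄
        + S x₁ x₂ (Sop e e' x₃) x₄ + S x₁ x₂ x₃ (Sop e e' x₄) = 0) := by
  have hskew : ∀ x y : E, ω x y = - ω y x := by
    intro x y
    have h := hω_alt (x + y)
    simp only [map_add, LinearMap.add_apply, hω_alt] at h
    linear_combination h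
  have h2 : ∀ a b c d : E, S b a c d = S a b c d := by
    intro a b c d
    simpa [Equiv.swap_apply_def] using hS_symm ![a, b, c, d] (Equiv.swap 0 1)
  have h3 : ∀ a b c d : E, S c b a d = S a b c d := by
    intro a b c d
    simpa [Equiv.swap_apply_def] using hS_symm ![a, b, c, d] (Equiv.swap 0 2)
  have h4 : ∀ a b c d : E, S d b c a = S a b c d := by
    intro a b c d
    simpa [Equiv.swap_apply_def] using hS_symm ![a, b, c, d] (Equiv.swap 0 3)
  have hmax : ∀ v : E, (∀ x ∈ L, ω v x = 0) → v ∈ L := by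
    intro v hv
    by_contra hvL
    have hnd : LinearMap.BilinForm.Nondegenerate ω := by
      refine ⟨hω_nd, fun y hy => hω_nd y fun x => ?_⟩
      rw [hskew, hy, neg_zero]
    have hlt : L < L ⊔ Submodule.span ℂ {v} := by
      refine lt_of_le_of_ne le_sup_left fun h => hvL ?_
      rw [h]
      exact Submodule.mem_sup_right (Submodule.mem_span_singleton_self v)
    have hle : L ⊔ Submodule.span ℂ {v} ≤
        LinearMap.BilinForm.orthogonal ω (L ⊔ Submodule.span ℂ {v}) := by
      intro a ha b hb
      obtain ⟨l, hl, p, hp, rfl⟩ := Submodule.mem_sup.1 ha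
      obtain ⟨m, hm, q, hq, rfl⟩ := Submodule.mem_sup.1 hb
      obtain ⟨c, rfl⟩ := Submodule.mem_span_singleton.1 hp
      obtain ⟨d, rfl⟩ := Submodule.mem_span_singleton.1 hq
      show ω (m + d • v) (l + c • v) = 0
      simp [hL_isotropic m hm l hl, hv l hl, hω_alt, hskew m v, hv m hm]
    have e1 := Submodule.finrank_lt_finrank_of_lt hlt
    have e2 := Submodule.finrank_mono hle
    rw [LinearMap.BilinForm.finrank_orthogonal hnd] at e2
    omega
  have himg : ∀ e e' x : E, Sop e e' x ∈ L := by
    intro e e' x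
    refine hmax _ fun y hy => ?_
    rw [hSop, ← h4]
    exact hvan _ _ _ _ hy
  have hker : ∀ e e' : E, ∀ x ∈ L, Sop e e' x = 0 := by
    intro e e' x hx
    refine hω_nd _ fun y => ?_
    rw [hSop, ← h3]
    exact hvan _ _ _ _ hx
  refine ⟨himg, hker, ?_, ?_⟩
  · intro e e' f f'
    ext x
    exact hker _ _ _ (himg _ _ _)
  · intro e e' x₁ x₂ x₃ x₄
    rw [hvan _ _ _ _ (himg e e' x₁), ← h2 x₁, hvan _ _ _ _ (himg e e' x₂),
      ← h3 x₁, hvan _ _ _ _ (himg e e' x₃), ← h4 x₁, hvan _ _ _ _ (himg e e' x₄)]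
    simp
end

section
/- Let H be a 2-dimensional complex vector space with a symplectic form ω_H. Then for every symmetric quadrilinear form S on E and all h,h',h'' ∈ H and e,e',e'' ∈ E, the following identity holds in the tensor product H ⊗ E: ω_H(h',h'')·h⊗(S_{e',e''}e) + ω_H(h'',h)·h'⊗(S_{e'',e}e') + ω_H(h,h')·h''⊗(S_{e,e'}e'') = 0. (This is the Jacobi identity, for triples of elements of H⊗E, of the bracket [h⊗e, h'⊗e'] = ω_H(h,h')·S_{e,e'}.) -/
open TensorProduct

/-- Jacobi identity in `H ⊗ E` for the bracket `[h⊗e, h'⊗e'] = ω_H(h,h')·S_{e,e'}`: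
for a symmetric quadrilinear form `S` on `E` and a 2-dimensional symplectic space
`(H, ω_H)`, one has
`ω_H(h',h'')·h⊗(S_{e',e''}e) + ω_H(h'',h)·h'⊗(S_{e'',e}e') + ω_H(h,h')·h''⊗(S_{e,e'}e'') = 0`. -/
theorem stmt_4 (E : Type*) [AddCommGroup E] [Module ℂ E] [FiniteDimensional ℂ E]
    (ω : E →ₗ[ℂ] E →ₗ[ℂ] ℂ)
    (hω_alt : ∀ x : E, ω x x = 0)
    (hω_nd : ∀ x : E, (∀ y : E, ω x y = 0) → x = 0)
    (S : E → E → E → E → ℂ)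
    (hS_lin : ∀ y z w : E, IsLinearMap ℂ (fun x => S x y z w))
    (hS_symm : ∀ (v : Fin 4 → E) (σ : Equiv.Perm (Fin 4)),
      S (v (σ 0)) (v (σ 1)) (v (σ 2)) (v (σ 3)) = S (v 0) (v 1) (v 2) (v 3))
    (Sop : E → E → E →ₗ[ℂ] E)
    (hSop : ∀ e e' x y : E, ω (Sop e e' x) y = S e e' x y)
    (H : Type*) [AddCommGroup H] [Module ℂ H] [FiniteDimensional ℂ H]
    (ωH : H →ₗ[ℂ] H →ₗ[ℂ] ℂ)
    (hH_dim : Module.finrank ℂ H = 2)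
    (hωH_alt : ∀ h : H, ωH h h = 0)
    (hωH_nd : ∀ h : H, (∀ h' : H, ωH h h' = 0) → h = 0) :
    ∀ (h h' h'' : H) (e e' e'' : E),
      ωH h' h'' • (h ⊗ₜ[ℂ] (Sop e' e'' e))
        + ωH h'' h • (h' ⊗ₜ[ℂ] (Sop e'' e e'))
        + ωH h h' • (h'' ⊗ₜ[ℂ] (Sop e e' e'')) = (0 : H ⊗[ℂ] E) := by
  intro h h' h'' e e' e''
  have rot : ∀ x y z w : E, S y z x w = S x y z w := by
    intro x y z w
    exact hS_symm ![x, y, z, w] (Equiv.swap 0 1 * Equiv.swap 1 2)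
  have rotOp : ∀ x y z : E, Sop y z x = Sop x y z := by
    intro x y z
    apply sub_eq_zero.mp
    apply hω_nd
    intro w
    rw [map_sub, LinearMap.sub_apply, hSop, hSop, rot, sub_self]
  have key : ωH h' h'' • h + ωH h'' h • h' + ωH h h' • h'' = 0 := by
    let b := Module.finBasisOfFinrankEq ℂ H hH_dim
    have hneg : ωH (b 1) (b 0) = - ωH (b 0) (b 1) := by
      have h1 := hωH_alt (b 0 + b 1)
      simp only [map_add, LinearMap.add_apply, hωH_alt] at h1
      linear_combination h1
    have hx : ∀ x : H, ∃ p q : ℂ, x = p • b 0 + q • b 1 := fun x =>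
      ⟨b.repr x 0, b.repr x 1, by
        have h2 := b.sum_repr x
        rw [Fin.sum_univ_two] at h2
        exact h2.symm⟩
    obtain ⟨p, q, hp⟩ := hx h
    obtain ⟨p', q', hp'⟩ := hx h'
    obtain ⟨p'', q'', hp''⟩ := hx h''
    rw [hp, hp', hp'']
    simp only [map_add, map_smul, LinearMap.add_apply, LinearMap.smul_apply, hωH_alt, hneg,
      smul_eq_mul]
    module
  rw [rotOp e e' e'', ← rotOp e'' e e']
  simp only [TensorProduct.smul_tmul', ← TensorProduct.add_tmul]
  rw [key, TensorProduct.zero_tmul]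
end

section
/- The symmetric quadrilinear form S satisfies the reality condition (S(jx₁,jx₂,jx₃,jx₄) = conj(S(x₁,x₂,x₃,x₄)) for all x₁,x₂,x₃,x₄ ∈ E) if and only if for all e,e' ∈ E the operator S_{je,e'} − S_{e,je'} commutes with j, i.e. (S_{je,e'} − S_{e,je'})∘j = j∘(S_{je,e'} − S_{e,je'}). -/
/-- The symmetric quadrilinear form `S` satisfies the reality condition `τS = S`
(i.e. `S(jx₁,jx₂,jx₃,jx₄) = conj (S(x₁,x₂,x₃,x₄))`) if and only if for all `e,e' ∈ E`
the operator `S_{je,e'} − S_{e,je'}` commutes with the quaternionic structure `j`. -/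
theorem stmt_5 (E : Type*) [AddCommGroup E] [Module ℂ E] [FiniteDimensional ℂ E]
    (ω : E →ₗ[ℂ] E →ₗ[ℂ] ℂ)
    (hω_alt : ∀ x : E, ω x x = 0)
    (hω_nd : ∀ x : E, (∀ y : E, ω x y = 0) → x = 0)
    (S : E → E → E → E → ℂ)
    (hS_lin : ∀ y z w : E, IsLinearMap ℂ (fun x => S x y z w))
    (hS_symm : ∀ (v : Fin 4 → E) (σ : Equiv.Perm (Fin 4)),
      S (v (σ 0)) (v (σ 1)) (v (σ 2)) (v (σ 3)) = S (v 0) (v 1) (v 2) (v 3))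
    (Sop : E → E → E →ₗ[ℂ] E)
    (hSop : ∀ e e' x y : E, ω (Sop e e' x) y = S e e' x y)
    (j : E → E)
    (hj_add : ∀ x y : E, j (x + y) = j x + j y)
    (hj_smul : ∀ (c : ℂ) (x : E), j (c • x) = (starRingEnd ℂ c) • j x)
    (hjj : ∀ x : E, j (j x) = -x)
    (hjω : ∀ x y : E, ω (j x) (j y) = starRingEnd ℂ (ω x y)) :
    (∀ x₁ x₂ x₃ x₄ : E,
        S (j x₁) (j x₂) (j x₃) (j x₄) = starRingEnd ℂ (S x₁ x₂ x₃ x₄)) ↔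
    (∀ e e' x : E,
        (Sop (j e) e' - Sop e (j e')) (j x) = j ((Sop (j e) e' - Sop e (j e')) x)) := by
  have neg1 : ∀ a b c d : E, S (-a) b c d = - S a b c d := fun a b c d =>
    (hS_lin b c d).map_neg a
  have smul1 : ∀ (t : ℂ) (a b c d : E), S (t • a) b c d = t * S a b c d := fun t a b c d =>
    (hS_lin b c d).map_smul t a
  have swap : ∀ a b c d : E, S a b c d = S b a c d := by
    intro a b c d
    have h := hS_symm ![b, a, c, d] (Equiv.swap 0 1)
    have h2 : (Equiv.swap (0 : Fin 4) 1) 2 = 2 := by decide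
    have h3 : (Equiv.swap (0 : Fin 4) 1) 3 = 3 := by decide
    rw [Equiv.swap_apply_left, Equiv.swap_apply_right, h2, h3] at h
    exact h
  have neg2 : ∀ a b c d : E, S a (-b) c d = - S a b c d := by
    intro a b c d
    rw [swap, neg1, swap]
  have smul2 : ∀ (t : ℂ) (a b c d : E), S a (t • b) c d = t * S a b c d := by
    intro t a b c d
    rw [swap, smul1, swap]
  have eL : ∀ e e' x y : E, ω ((Sop (j e) e' - Sop e (j e')) (j x)) (j y)
      = S (j e) e' (j x) (j y) - S e (j e') (j x) (j y) := by
    intro e e' x y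
    simp only [LinearMap.sub_apply, map_sub, hSop]
  have eR : ∀ e e' x y : E, ω (j ((Sop (j e) e' - Sop e (j e')) x)) (j y)
      = starRingEnd ℂ (S (j e) e' x y) - starRingEnd ℂ (S e (j e') x y) := by
    intro e e' x y
    rw [hjω]
    simp only [LinearMap.sub_apply, map_sub, hSop]
  constructor
  · intro h e e' x
    rw [← sub_eq_zero]
    apply hω_nd
    intro y
    have hy : y = j (-(j y)) := by
      have := hj_smul (-1) (j y)
      simp only [neg_smul, one_smul, map_neg, map_one, hjj, neg_neg] at this
      exact this.symm
    rw [hy, map_sub, LinearMap.sub_apply, eL, eR, ← h, ← h, hjj, hjj, neg1, neg2]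
    ring
  · intro h
    have H : ∀ e e' x y : E, S (j e) e' (j x) (j y) - S e (j e') (j x) (j y)
        = starRingEnd ℂ (S (j e) e' x y) - starRingEnd ℂ (S e (j e') x y) := by
      intro e e' x y
      rw [← eL, ← eR, h]
    intro x₁ x₂ x₃ x₄
    have h1 := H x₁ (j x₂) x₃ x₄
    have h2 := H (Complex.I • x₁) (j x₂) x₃ x₄
    simp only [hj_smul, smul1, hjj, neg2, map_mul, map_neg, Complex.conj_I, neg_neg] at h1 h2
    have h3 := congrArg (fun t => Complex.I * t) h2
    linear_combination (1 / 2) * h1 + (1 / 2) * h3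
      + (1 / 2) * (S (j x₁) (j x₂) (j x₃) (j x₄) - S x₁ x₂ (j x₃) (j x₄)
        + starRingEnd ℂ (S (j x₁) (j x₂) x₃ x₄)
        - starRingEnd ℂ (S x₁ x₂ x₃ x₄)) * Complex.I_mul_I
end

section
/- Let L ⊆ E be a Lagrangian subspace and let L⁰ := {x ∈ L : γ(x,y) = 0 for all y ∈ L} be the kernel of the restriction of γ to L. Then j(L⁰) = L⁰; in particular j(L⁰) ⊆ L. -/
/-- If `L ⊆ E` is a Lagrangian subspace and `L⁰` is the kernel of the restriction of
the Hermitian form `γ(x,y) = ω(x,jy)` to `L`, then `j(L⁰) = L⁰`; in particular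
`j(L⁰) ⊆ L`. -/
theorem stmt_6 (E : Type*) [AddCommGroup E] [Module ℂ E] [FiniteDimensional ℂ E]
    (ω : E →ₗ[ℂ] E →ₗ[ℂ] ℂ)
    (hω_alt : ∀ x : E, ω x x = 0)
    (hω_nd : ∀ x : E, (∀ y : E, ω x y = 0) → x = 0)
    (j : E → E)
    (hj_add : ∀ x y : E, j (x + y) = j x + j y)
    (hj_smul : ∀ (c : ℂ) (x : E), j (c • x) = (starRingEnd ℂ c) • j x)
    (hjj : ∀ x : E, j (j x) = -x)
    (hjω : ∀ x y : E, ω (j x) (j y) = starRingEnd ℂ (ω x y))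
    (L : Submodule ℂ E)
    (hL_isotropic : ∀ x ∈ L, ∀ y ∈ L, ω x y = 0)
    (hL_dim : Module.finrank ℂ L = Module.finrank ℂ E / 2) :
    j '' {x : E | x ∈ L ∧ ∀ y ∈ L, ω x (j y) = 0}
        = {x : E | x ∈ L ∧ ∀ y ∈ L, ω x (j y) = 0} ∧
    (∀ x : E, (x ∈ L ∧ ∀ y ∈ L, ω x (j y) = 0) → j x ∈ L) := by
  have hneg : ∀ x y : E, ω x y = -ω y x := by
    intro x y
    have h := hω_alt (x + y)
    simp only [map_add, LinearMap.add_apply, hω_alt] at h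
    linear_combination h
  have hmax : ∀ x : E, (∀ y ∈ L, ω x y = 0) → x ∈ L := by
    intro x hx
    by_contra hxL
    have hrefl : LinearMap.BilinForm.IsRefl ω := by
      intro a b hab
      have := hneg b a
      simpa [hab] using this
    have hnd : LinearMap.BilinForm.Nondegenerate ω := by
      refine ⟨hω_nd, ?_⟩
      intro y hy
      apply hω_nd
      intro z
      rw [hneg, hy z, neg_zero]
    have hlt : L < L ⊔ Submodule.span ℂ {x} := by
      refine lt_of_le_of_ne le_sup_left ?_
      intro h
      apply hxL
      rw [h]
      exact Submodule.mem_sup_right (Submodule.mem_span_singleton_self x)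
    have h1 := Submodule.finrank_lt_finrank_of_lt hlt
    have h2 := LinearMap.BilinForm.finrank_orthogonal hnd (L ⊔ Submodule.span ℂ {x})
    have hle : L ⊔ Submodule.span ℂ {x} ≤
        LinearMap.BilinForm.orthogonal ω (L ⊔ Submodule.span ℂ {x}) := by
      intro a ha b hb
      obtain ⟨l, hl, s, hs, rfl⟩ := Submodule.mem_sup.1 ha
      obtain ⟨m, hm, t, ht, rfl⟩ := Submodule.mem_sup.1 hb
      obtain ⟨c, rfl⟩ := Submodule.mem_span_singleton.1 hs
      obtain ⟨d, rfl⟩ := Submodule.mem_span_singleton.1 ht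
      have e : ω m x = 0 := by rw [hneg, hx m hm, neg_zero]
      simp [LinearMap.BilinForm.isOrtho_def, hL_isotropic m hm l hl, hx l hl, e, hω_alt]
    have h3 := Submodule.finrank_mono hle
    have h4 := Submodule.finrank_le (L ⊔ Submodule.span ℂ {x})
    omega
  have hjneg : ∀ x : E, j (-x) = -j x := by
    intro x
    have h := hj_smul (-1) x
    simpa using h
  have hmem : ∀ x : E, (x ∈ L ∧ ∀ y ∈ L, ω x (j y) = 0) → j x ∈ L := by
    rintro x ⟨_, hx⟩
    apply hmax
    intro y hy
    have h := hjω x (j y)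
    rw [hjj, hx y hy] at h
    simpa using h
  have hker : ∀ x : E, (x ∈ L ∧ ∀ y ∈ L, ω x (j y) = 0) →
      ∀ y ∈ L, ω (j x) (j y) = 0 := by
    rintro x ⟨hxL, _⟩ y hy
    rw [hjω, hL_isotropic x hxL y hy, map_zero]
  refine ⟨?_, hmem⟩
  ext x
  constructor
  · rintro ⟨z, hz, rfl⟩
    exact ⟨hmem z hz, hker z hz⟩
  · intro hx
    refine ⟨-j x, ⟨L.neg_mem (hmem x hx), ?_⟩, ?_⟩
    · intro y hy
      simp [hker x hx y hy]
    · rw [hjneg, hjj, neg_neg]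
end

section
/- Let L ⊆ E be a Lagrangian subspace with L = L⁰ ⊕ L⁺ ⊕ L⁻, where L⁰ := {x ∈ L : γ(x,y) = 0 for all y ∈ L}, the three summands are pairwise γ-orthogonal, γ is positive definite on L⁺ (γ(x,x) > 0 for 0 ≠ x ∈ L⁺) and negative definite on L⁻ (γ(x,x) < 0 for 0 ≠ x ∈ L⁻). Then the subspace F := L⁺ + L⁻ + j(L⁺) + j(L⁻) of E is j-invariant, γ(u,v) = 0 for all u ∈ L⁺ + L⁻ and v ∈ j(L⁺) + j(L⁻), and the restrictions of γ and of ω to F are both nondegenerate. -/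
/-- Let `L = L⁰ ⊕ L⁺ ⊕ L⁻` be a Lagrangian subspace decomposed γ-orthogonally, with
`L⁰` the kernel of `γ|L`, `γ` positive definite on `L⁺` and negative definite on `L⁻`.
Then `F := L⁺ + L⁻ + j(L⁺) + j(L⁻)` is `j`-invariant, `L⁺ + L⁻` is γ-orthogonal to
`j(L⁺) + j(L⁻)`, and both `γ` and `ω` restrict nondegenerately to `F`. -/
theorem stmt_7 (E : Type*) [AddCommGroup E] [Module ℂ E] [FiniteDimensional ℂ E]
    (ω : E →ₗ[ℂ] E →ₗ[ℂ] ℂ)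
    (hω_alt : ∀ x : E, ω x x = 0)
    (hω_nd : ∀ x : E, (∀ y : E, ω x y = 0) → x = 0)
    (j : E → E)
    (hj_add : ∀ x y : E, j (x + y) = j x + j y)
    (hj_smul : ∀ (c : ℂ) (x : E), j (c • x) = (starRingEnd ℂ c) • j x)
    (hjj : ∀ x : E, j (j x) = -x)
    (hjω : ∀ x y : E, ω (j x) (j y) = starRingEnd ℂ (ω x y))
    (L L0 Lp Lm : Submodule ℂ E)
    (hL_isotropic : ∀ x ∈ L, ∀ y ∈ L, ω x y = 0)
    (hL_dim : Module.finrank ℂ L = Module.finrank ℂ E / 2)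
    (hL0 : ∀ x : E, x ∈ L0 ↔ (x ∈ L ∧ ∀ y ∈ L, ω x (j y) = 0))
    (hLpL : Lp ≤ L) (hLmL : Lm ≤ L)
    (hdecomp : ∀ x ∈ L, ∃ a ∈ L0, ∃ b ∈ Lp, ∃ c ∈ Lm, x = a + b + c)
    (horth0p : ∀ x ∈ L0, ∀ y ∈ Lp, ω x (j y) = 0)
    (horth0m : ∀ x ∈ L0, ∀ y ∈ Lm, ω x (j y) = 0)
    (horthpm : ∀ x ∈ Lp, ∀ y ∈ Lm, ω x (j y) = 0)
    (hpos : ∀ x ∈ Lp, x ≠ 0 → 0 < (ω x (j x)).re)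
    (hneg : ∀ x ∈ Lm, x ≠ 0 → (ω x (j x)).re < 0) :
    (∀ v ∈ {v : E | ∃ a ∈ Lp, ∃ b ∈ Lm, ∃ c ∈ Lp, ∃ d ∈ Lm, v = a + b + j c + j d},
      j v ∈ {v : E | ∃ a ∈ Lp, ∃ b ∈ Lm, ∃ c ∈ Lp, ∃ d ∈ Lm, v = a + b + j c + j d}) ∧
    (∀ a ∈ Lp, ∀ b ∈ Lm, ∀ c ∈ Lp, ∀ d ∈ Lm, ω (a + b) (j (j c + j d)) = 0) ∧
    (∀ u ∈ {v : E | ∃ a ∈ Lp, ∃ b ∈ Lm, ∃ c ∈ Lp, ∃ d ∈ Lm, v = a + b + j c + j d},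
      (∀ v ∈ {v : E | ∃ a ∈ Lp, ∃ b ∈ Lm, ∃ c ∈ Lp, ∃ d ∈ Lm, v = a + b + j c + j d},
        ω u (j v) = 0) → u = 0) ∧
    (∀ u ∈ {v : E | ∃ a ∈ Lp, ∃ b ∈ Lm, ∃ c ∈ Lp, ∃ d ∈ Lm, v = a + b + j c + j d},
      (∀ v ∈ {v : E | ∃ a ∈ Lp, ∃ b ∈ Lm, ∃ c ∈ Lp, ∃ d ∈ Lm, v = a + b + j c + j d},
        ω u v = 0) → u = 0) := by
  have h0 : j 0 = 0 := by simpa using hj_add 0 0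
  have hn : ∀ x, j (-x) = -j x := fun x => by
    have h := hj_add x (-x)
    rw [add_neg_cancel, h0] at h
    exact (neg_eq_of_add_eq_zero_right h.symm).symm
  have hsk : ∀ x y, ω x y = -ω y x := fun x y => by
    have h := hω_alt (x + y)
    simp only [map_add, LinearMap.add_apply, hω_alt, zero_add, add_zero] at h
    linear_combination h
  have hherm : ∀ x y, ω (j x) y = -starRingEnd ℂ (ω x (j y)) := fun x y => by
    rw [← hjω, hjj, map_neg, neg_neg]
  have horthmp : ∀ x ∈ Lm, ∀ y ∈ Lp, ω x (j y) = 0 := fun x hx y hy => by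
    rw [hsk, hherm, horthpm y hy x hx]; simp
  have hjF : ∀ v ∈ {v : E | ∃ a ∈ Lp, ∃ b ∈ Lm, ∃ c ∈ Lp, ∃ d ∈ Lm, v = a + b + j c + j d},
      j v ∈ {v : E | ∃ a ∈ Lp, ∃ b ∈ Lm, ∃ c ∈ Lp, ∃ d ∈ Lm, v = a + b + j c + j d} := by
    rintro v ⟨a, ha, b, hb, c, hc, d, hd, rfl⟩
    refine ⟨-c, Lp.neg_mem hc, -d, Lm.neg_mem hd, a, ha, b, hb, ?_⟩
    simp only [hj_add, hjj]
    abel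
  have hnd : ∀ u ∈ {v : E | ∃ a ∈ Lp, ∃ b ∈ Lm, ∃ c ∈ Lp, ∃ d ∈ Lm, v = a + b + j c + j d},
      (∀ v ∈ {v : E | ∃ a ∈ Lp, ∃ b ∈ Lm, ∃ c ∈ Lp, ∃ d ∈ Lm, v = a + b + j c + j d},
        ω u v = 0) → u = 0 := by
    rintro u ⟨a, ha, b, hb, c, hc, d, hd, rfl⟩ h
    have zp := Lp.zero_mem
    have zm := Lm.zero_mem
    have ea := h (j a) ⟨0, zp, 0, zm, a, ha, 0, zm, by simp [h0]⟩
    have eb := h (j b) ⟨0, zp, 0, zm, 0, zp, b, hb, by simp [h0]⟩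
    have ec := h c ⟨c, hc, 0, zm, 0, zp, 0, zm, by simp [h0]⟩
    have ed := h d ⟨0, zp, d, hd, 0, zp, 0, zm, by simp [h0]⟩
    simp only [map_add, LinearMap.add_apply, hjω, horthmp b hb a ha,
      hL_isotropic c (hLpL hc) a (hLpL ha), hL_isotropic d (hLmL hd) a (hLpL ha),
      map_zero, add_zero] at ea
    simp only [map_add, LinearMap.add_apply, hjω, horthpm a ha b hb,
      hL_isotropic c (hLpL hc) b (hLmL hb), hL_isotropic d (hLmL hd) b (hLmL hb),
      map_zero, add_zero, zero_add] at eb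
    simp only [map_add, LinearMap.add_apply, hherm, horthmp d hd c hc,
      hL_isotropic a (hLpL ha) c (hLpL hc), hL_isotropic b (hLmL hb) c (hLpL hc),
      map_zero, add_zero, zero_add, neg_zero, neg_eq_zero, map_eq_zero] at ec
    simp only [map_add, LinearMap.add_apply, hherm, horthpm c hc d hd,
      hL_isotropic a (hLpL ha) d (hLmL hd), hL_isotropic b (hLmL hb) d (hLmL hd),
      map_zero, add_zero, zero_add, neg_zero, neg_eq_zero, map_eq_zero] at ed
    have pz : ∀ x ∈ Lp, ω x (j x) = 0 → x = 0 := fun x hx e => by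
      by_contra hne
      have := hpos x hx hne
      simp [e] at this
    have mz : ∀ x ∈ Lm, ω x (j x) = 0 → x = 0 := fun x hx e => by
      by_contra hne
      have := hneg x hx hne
      simp [e] at this
    rw [pz a ha ea, mz b hb eb, pz c hc ec, mz d hd ed]
    simp [h0]
  refine ⟨hjF, ?_, ?_, hnd⟩
  · intro a ha b hb c hc d hd
    simp only [hj_add, hjj, map_add, map_neg, LinearMap.add_apply,
      hL_isotropic a (hLpL ha) c (hLpL hc), hL_isotropic a (hLpL ha) d (hLmL hd),
      hL_isotropic b (hLmL hb) c (hLpL hc), hL_isotropic b (hLmL hb) d (hLmL hd)]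
    simp
  · intro u hu h
    refine hnd u hu fun v hv => ?_
    have := h (j v) (hjF v hv)
    rwa [hjj, map_neg, neg_eq_zero] at this
end

section
/- Let 𝔤 = 𝔨 ⊕ 𝔪 be a symmetric decomposition of a finite-dimensional semisimple Lie algebra 𝔤 over a field of characteristic zero, and assume the decomposition is almost effective, i.e. 𝔨 contains no nonzero ideal of 𝔤. Then 𝔨 equals the linear span of {[x,y] : x,y ∈ 𝔪}. -/
/-- For an almost effective symmetric decomposition `𝔤 = 𝔨 ⊕ 𝔪` of a finite-dimensional
semisimple Lie algebra (Killing form nondegenerate) over a field of characteristic zero,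
one has `𝔨 = span {[x,y] : x,y ∈ 𝔪}`. -/
theorem stmt_9 (K : Type*) [Field K] [CharZero K]
    (L : Type*) [LieRing L] [LieAlgebra K L] [FiniteDimensional K L]
    (hss : ∀ x : L, (∀ y : L, killingForm K L x y = 0) → x = 0)
    (𝔨 𝔪 : Submodule K L)
    (hcompl : IsCompl 𝔨 𝔪)
    (hkk : ∀ x ∈ 𝔨, ∀ y ∈ 𝔨, ⁅x, y⁆ ∈ 𝔨)
    (hkm : ∀ x ∈ 𝔨, ∀ y ∈ 𝔪, ⁅x, y⁆ ∈ 𝔪)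
    (hmm : ∀ x ∈ 𝔪, ∀ y ∈ 𝔪, ⁅x, y⁆ ∈ 𝔨)
    (heff : ∀ I : LieIdeal K L, (∀ x ∈ I, x ∈ 𝔨) → I = ⊥) :
    𝔨 = Submodule.span K {z : L | ∃ x ∈ 𝔪, ∃ y ∈ 𝔪, z = ⁅x, y⁆} := by
  set S := Submodule.span K {z : L | ∃ x ∈ 𝔪, ∃ y ∈ 𝔪, z = ⁅x, y⁆} with hS
  have hdec : ∀ x : L, ∃ a ∈ 𝔨, ∃ b ∈ 𝔪, a + b = x := fun x => by
    have : x ∈ 𝔨 ⊔ 𝔪 := by rw [hcompl.sup_eq_top]; trivial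
    exact Submodule.mem_sup.1 this
  have hdis : ∀ x ∈ 𝔨, x ∈ 𝔪 → x = 0 := fun x h1 h2 =>
    Submodule.disjoint_def.1 hcompl.disjoint x h1 h2
  have hSk : S ≤ 𝔨 := by
    rw [hS, Submodule.span_le]
    rintro z ⟨x, hx, y, hy, rfl⟩
    exact hmm x hx y hy
  have hmS : ∀ x ∈ 𝔪, ∀ y ∈ 𝔪, ⁅x, y⁆ ∈ S := fun x hx y hy =>
    Submodule.subset_span ⟨x, hx, y, hy, rfl⟩
  have hkS : ∀ a ∈ 𝔨, ∀ s ∈ S, ⁅a, s⁆ ∈ S := by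
    intro a ha s hs
    induction hs using Submodule.span_induction with
    | mem z hz =>
      obtain ⟨x, hx, y, hy, rfl⟩ := hz
      rw [leibniz_lie]
      exact S.add_mem (hmS _ (hkm a ha x hx) _ hy) (hmS _ hx _ (hkm a ha y hy))
    | zero => simp
    | add x y _ _ h1 h2 => rw [lie_add]; exact S.add_mem h1 h2
    | smul c x _ h => rw [lie_smul]; exact S.smul_mem c h
  have hmk : ∀ x ∈ 𝔪, ∀ y ∈ 𝔨, ⁅x, y⁆ ∈ 𝔪 := fun x hx y hy => by
    rw [← lie_skew]; exact 𝔪.neg_mem (hkm y hy x hx)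
  let J : LieIdeal K L :=
    { (S ⊔ 𝔪) with
      lie_mem := by
        intro x y hy
        change y ∈ S ⊔ 𝔪 at hy
        change ⁅x, y⁆ ∈ S ⊔ 𝔪
        obtain ⟨a, ha, b, hb, rfl⟩ := hdec x
        obtain ⟨s, hs, c, hc, rfl⟩ := Submodule.mem_sup.1 hy
        have e : ⁅a + b, s + c⁆ = (⁅a, s⁆ + ⁅b, c⁆) + (⁅a, c⁆ + ⁅b, s⁆) := by
          simp only [add_lie, lie_add]; abel
        rw [e]
        exact Submodule.add_mem_sup (S.add_mem (hkS a ha s hs) (hmS b hb c hc))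
          (𝔪.add_mem (hkm a ha c hc) (hmk b hb s (hSk hs))) }
  have hJ : ∀ x, x ∈ J ↔ x ∈ S ⊔ 𝔪 := fun x => Iff.rfl
  have hker : ∀ x : L, (∀ y : L, ⁅x, y⁆ = 0) → x = 0 := by
    intro x hx
    apply hss
    intro y
    have h0 : LieAlgebra.ad K L x = 0 := by ext z; simp [hx]
    rw [killingForm_apply_apply, h0]
    simp
  haveI : LieAlgebra.IsKilling K L := ⟨by
    rw [LieSubmodule.eq_bot_iff]
    intro x hx
    apply hss
    intro y
    have := (LieIdeal.mem_killingCompl (R := K) (L := L) (I := ⊤)).1 hx y trivial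
    rw [LieModule.traceForm_comm]
    exact this⟩
  have hc := LieIdeal.isCompl_killingCompl J
  set P := LieIdeal.killingCompl K L J with hP
  have hcomm : ∀ x ∈ P, ∀ y ∈ J, ⁅x, y⁆ = 0 := by
    intro x hx y hy
    have h1 : ⁅x, y⁆ ∈ J := lie_mem_right K L J x y hy
    have h2 : ⁅x, y⁆ ∈ P := lie_mem_left K L P x y hx
    have h3 : ⁅x, y⁆ ∈ J ⊓ P := ⟨h1, h2⟩
    rw [hc.inf_eq_bot] at h3
    simpa using h3
  have hPdec : ∀ x : L, ∃ a ∈ J, ∃ b ∈ P, a + b = x := fun x => by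
    have : x ∈ J ⊔ P := by rw [hc.sup_eq_top]; trivial
    exact (LieSubmodule.mem_sup _ _ _).1 this
  have hmJ : ∀ x ∈ 𝔪, x ∈ J := fun x hx => (hJ x).2 (Submodule.mem_sup_right hx)
  have hPk : ∀ x ∈ P, x ∈ 𝔨 := by
    intro x hx
    obtain ⟨a, ha, b, hb, rfl⟩ := hdec x
    have hbm : ∀ y ∈ 𝔪, ⁅b, y⁆ = 0 := by
      intro y hy
      have h := hcomm _ hx y (hmJ y hy)
      rw [add_lie] at h
      apply hdis _ (hmm b hb y hy)
      rw [eq_neg_of_add_eq_zero_right h]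
      exact 𝔪.neg_mem (hkm a ha y hy)
    have hbS : ∀ s ∈ S, ⁅b, s⁆ = 0 := by
      intro s hs
      induction hs using Submodule.span_induction with
      | mem z hz =>
        obtain ⟨x, hx, y, hy, rfl⟩ := hz
        rw [leibniz_lie, hbm x hx, hbm y hy]; simp
      | zero => simp
      | add x y _ _ h1 h2 => rw [lie_add, h1, h2, add_zero]
      | smul c x _ h => rw [lie_smul, h, smul_zero]
    have hb0 : b = 0 := by
      apply hker
      intro y
      obtain ⟨j, hj, p, hp, rfl⟩ := hPdec y
      obtain ⟨s, hs, c, hc', rfl⟩ := Submodule.mem_sup.1 ((hJ j).1 hj)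
      rw [lie_add, lie_add, hbS s hs, hbm c hc', ← lie_skew, hcomm p hp b (hmJ b hb)]
      simp
    rw [hb0, add_zero]; exact ha
  have hPbot := heff P hPk
  apply le_antisymm _ hSk
  intro x hx
  obtain ⟨j, hj, p, hp, rfl⟩ := hPdec x
  rw [hPbot] at hp
  have hp0 : p = 0 := by simpa using hp
  subst hp0
  rw [add_zero] at hx ⊢
  obtain ⟨s, hs, c, hc', rfl⟩ := Submodule.mem_sup.1 ((hJ j).1 hj)
  have : c = 0 := hdis c (by simpa using 𝔨.sub_mem hx (hSk hs)) hc'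
  rw [this, add_zero]; exact hs
end

section
/- Suppose that (i) (C_x·D) = 0 for all x ∈ W (as quadrilinear forms), and (ii) for all x,y ∈ W the trilinear form (z,u,v) ↦ D(C_x y, z, u, v) + (D_{x,y}·C)(z,u,v) vanishes identically. Then D_{x,y} ∘ C_z = 0 and C_z ∘ D_{x,y} = 0 for all x,y,z ∈ W. -/
/-- If `C_x · D = 0` for all `x ∈ W` and `D(C_x y, ·,·,·) + (D_{x,y}·C)(·,·,·) = 0`
for all `x,y ∈ W`, then `D_{x,y} ∘ C_z = 0` and `C_z ∘ D_{x,y} = 0` for all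
`x,y,z ∈ W`. -/
theorem stmt_10 (W : Type*) [AddCommGroup W] [Module ℂ W] [FiniteDimensional ℂ W]
    (ω : W →ₗ[ℂ] W →ₗ[ℂ] ℂ)
    (hω_alt : ∀ x : W, ω x x = 0)
    (hω_nd : ∀ x : W, (∀ y : W, ω x y = 0) → x = 0)
    (C : W → W → W → ℂ)
    (hC_lin : ∀ y z : W, IsLinearMap ℂ (fun x => C x y z))
    (hC_symm : ∀ (v : Fin 3 → W) (σ : Equiv.Perm (Fin 3)),
      C (v (σ 0)) (v (σ 1)) (v (σ 2)) = C (v 0) (v 1) (v 2))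
    (D : W → W → W → W → ℂ)
    (hD_lin : ∀ y z w : W, IsLinearMap ℂ (fun x => D x y z w))
    (hD_symm : ∀ (v : Fin 4 → W) (σ : Equiv.Perm (Fin 4)),
      D (v (σ 0)) (v (σ 1)) (v (σ 2)) (v (σ 3)) = D (v 0) (v 1) (v 2) (v 3))
    (Cop : W → W →ₗ[ℂ] W)
    (hCop : ∀ x y z : W, ω (Cop x y) z = C x y z)
    (Dop : W → W → W →ₗ[ℂ] W)
    (hDop : ∀ x y z w : W, ω (Dop x y z) w = D x y z w)
    (h1 : ∀ x a b c d : W,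
      -(D (Cop x a) b c d + D a (Cop x b) c d
        + D a b (Cop x c) d + D a b c (Cop x d)) = 0)
    (h2 : ∀ x y z u v : W,
      D (Cop x y) z u v
        + (-(C (Dop x y z) u v + C z (Dop x y u) v + C z u (Dop x y v))) = 0) :
    ∀ x y z : W, (Dop x y) ∘ₗ (Cop z) = 0 ∧ (Cop z) ∘ₗ (Dop x y) = 0 := by
  have c1 : ∀ a b c, C a b c = C b a c := fun a b c => by
    have h := hC_symm ![a, b, c] (Equiv.swap 0 1)
    rw [Equiv.swap_apply_left, Equiv.swap_apply_right,
      Equiv.swap_apply_of_ne_of_ne (by decide) (by decide)] at h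
    exact h.symm
  have c2 : ∀ a b c, C a b c = C a c b := fun a b c => by
    have h := hC_symm ![a, b, c] (Equiv.swap 1 2)
    rw [Equiv.swap_apply_of_ne_of_ne (by decide) (by decide), Equiv.swap_apply_left,
      Equiv.swap_apply_right] at h
    exact h.symm
  have d1 : ∀ a b c d, D a b c d = D b a c d := fun a b c d => by
    have h := hD_symm ![a, b, c, d] (Equiv.swap 0 1)
    rw [Equiv.swap_apply_left, Equiv.swap_apply_right,
      Equiv.swap_apply_of_ne_of_ne (by decide) (by decide),
      Equiv.swap_apply_of_ne_of_ne (by decide) (by decide)] at h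
    exact h.symm
  have d2 : ∀ a b c d, D a b c d = D a c b d := fun a b c d => by
    have h := hD_symm ![a, b, c, d] (Equiv.swap 1 2)
    rw [Equiv.swap_apply_left, Equiv.swap_apply_right,
      Equiv.swap_apply_of_ne_of_ne (by decide) (by decide),
      Equiv.swap_apply_of_ne_of_ne (by decide) (by decide)] at h
    exact h.symm
  have d3 : ∀ a b c d, D a b c d = D a b d c := fun a b c d => by
    have h := hD_symm ![a, b, c, d] (Equiv.swap 2 3)
    rw [Equiv.swap_apply_left, Equiv.swap_apply_right,
      Equiv.swap_apply_of_ne_of_ne (by decide) (by decide),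
      Equiv.swap_apply_of_ne_of_ne (by decide) (by decide)] at h
    exact h.symm
  have hanti : ∀ x y, ω x y = - ω y x := fun x y => by
    have h := hω_alt (x + y)
    simp only [map_add, LinearMap.add_apply, hω_alt] at h
    linear_combination h
  have hsub : ∀ x y, (∀ z, ω x z = ω y z) → x = y := fun x y h =>
    sub_eq_zero.mp (hω_nd _ fun z => by simp [h z])
  have cop : ∀ x y, Cop x y = Cop y x := fun x y =>
    hsub _ _ fun z => by rw [hCop, hCop, c1]
  -- the 5-linear form T(x,y;a,b,c) = D(C_x y, a, b, c)
  obtain ⟨T, hT⟩ : ∃ T : W → W → W → W → W → ℂ,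
      ∀ x y a b c, D (Cop x y) a b c = T x y a b c := ⟨_, fun _ _ _ _ _ => rfl⟩
  have t1 : ∀ x y a b c, T x y a b c = T y x a b c := fun x y a b c => by
    rw [← hT, ← hT, cop]
  have t2 : ∀ x y a b c, T x y a b c = T x y b a c := fun x y a b c => by
    rw [← hT, ← hT, d2]
  have t3 : ∀ x y a b c, T x y a b c = T x y a c b := fun x y a b c => by
    rw [← hT, ← hT, d3]
  have hCT : ∀ x y a b c, C x y (Dop a b c) = - T x y a b c := fun x y a b c => by
    rw [← hCop, hanti, hDop, d3, d2, d1, hT]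
  have star : ∀ x a b c d, T x a b c d + T x b a c d + T x c a b d + T x d a b c = 0 :=
    fun x a b c d => by
      have h := h1 x a b c d
      rw [d1 a (Cop x b), d2 a b (Cop x c), d1 a (Cop x c), d3 a b c (Cop x d),
        d2 a b (Cop x d), d1 a (Cop x d)] at h
      simp only [hT] at h
      linear_combination -h
  have ker : ∀ x y z u v, T x y z u v + T u v x y z + T z v x y u + T z u x y v = 0 :=
    fun x y z u v => by
      have h := h2 x y z u v
      rw [c1 (Dop x y z) u v, c2 u (Dop x y z) v, c2 z (Dop x y u) v] at h
      simp only [hT, hCT] at h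
      linear_combination h
  have zero : ∀ x y z u v, T x y z u v = 0 := fun x y z u v => by
    have k := ker x y z u v
    have sx := star x y z u v
    have sy := star y x z u v
    have sz := star z x y u v
    have su := star u x y z v
    have sv := star v x y z u
    rw [t1 y x] at sy
    rw [t1 z x, t1 z y] at sz
    rw [t1 u x, t1 u y, t1 u z] at su
    rw [t1 v x, t1 v y, t1 v z, t1 v u] at sv
    linear_combination (1/2) * k + (1/4) * (sx + sy) - (1/4) * (sz + su + sv)
  intro x y z
  constructor
  · ext w
    refine hω_nd _ fun v => ?_
    rw [LinearMap.comp_apply, hDop, d2, d1, hT, zero]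
  · ext w
    refine hω_nd _ fun v => ?_
    rw [LinearMap.comp_apply, hCop, c2, hCT, zero, neg_zero]
end

section
/- Suppose that (i) C_{B̂w} = 0, C_w ∘ B̂ = 0 and B̂ ∘ C_w = 0 for all w ∈ W; (ii) (B̂·D) = 0 (as quadrilinear forms); (iii) for all w ∈ W the trilinear form (x,y,z) ↦ −8·D(B̂w, x, y, z) + 3·(C_w·C)(x,y,z) vanishes identically; and (iv) for all w,w' ∈ W the bilinear form (x,y) ↦ (3/2)·C(C_w w', x, y) + 2·(D_{w,w'}·B)(x,y) vanishes identically. Then: C_z ∘ C_x = 0 for all x,z ∈ W (equivalently C(C_x y, u, v) = 0 for all x,y,u,v), hence [C_x,C_y] = 0 and C_x·C = 0 for all x,y ∈ W, and moreover D(B̂w, x, y, z) = 0 for all w,x,y,z ∈ W. -/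
/-- Under hypotheses (i)–(iv) (equations (3.9), (3.7), (3.10), (3.12) of the paper) on
the symmetric forms `B, C, D` on a complex symplectic vector space `W`, one has
`C_z ∘ C_x = 0` (equivalently `C(C_x y, u, v) = 0`), hence `[C_x, C_y] = 0` and
`C_x · C = 0`, and moreover `D(B̂w, x, y, z) = 0`. -/
theorem stmt_11 (W : Type*) [AddCommGroup W] [Module ℂ W] [FiniteDimensional ℂ W]
    (ω : W →ₗ[ℂ] W →ₗ[ℂ] ℂ)
    (hω_alt : ∀ x : W, ω x x = 0)
    (hω_nd : ∀ x : W, (∀ y : W, ω x y = 0) → x = 0)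
    (B : W → W → ℂ)
    (hB_lin : ∀ y : W, IsLinearMap ℂ (fun x => B x y))
    (hB_symm : ∀ x y : W, B x y = B y x)
    (C : W → W → W → ℂ)
    (hC_lin : ∀ y z : W, IsLinearMap ℂ (fun x => C x y z))
    (hC_symm : ∀ (v : Fin 3 → W) (σ : Equiv.Perm (Fin 3)),
      C (v (σ 0)) (v (σ 1)) (v (σ 2)) = C (v 0) (v 1) (v 2))
    (D : W → W → W → W → ℂ)
    (hD_lin : ∀ y z w : W, IsLinearMap ℂ (fun x => D x y z w))
    (hD_symm : ∀ (v : Fin 4 → W) (σ : Equiv.Perm (Fin 4)),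
      D (v (σ 0)) (v (σ 1)) (v (σ 2)) (v (σ 3)) = D (v 0) (v 1) (v 2) (v 3))
    (Bop : W →ₗ[ℂ] W)
    (hBop : ∀ x y : W, ω (Bop x) y = B x y)
    (Cop : W → W →ₗ[ℂ] W)
    (hCop : ∀ x y z : W, ω (Cop x y) z = C x y z)
    (Dop : W → W → W →ₗ[ℂ] W)
    (hDop : ∀ x y z w : W, ω (Dop x y z) w = D x y z w)
    (hi1 : ∀ w : W, Cop (Bop w) = 0)
    (hi2 : ∀ w : W, (Cop w) ∘ₗ Bop = 0)
    (hi3 : ∀ w : W, Bop ∘ₗ (Cop w) = 0)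
    (hii : ∀ a b c d : W,
      -(D (Bop a) b c d + D a (Bop b) c d + D a b (Bop c) d + D a b c (Bop d)) = 0)
    (hiii : ∀ w x y z : W,
      -8 * D (Bop w) x y z
        + 3 * (-(C (Cop w x) y z + C x (Cop w y) z + C x y (Cop w z))) = 0)
    (hiv : ∀ w w' x y : W,
      (3 / 2 : ℂ) * C (Cop w w') x y
        + 2 * (-(B (Dop w w' x) y + B x (Dop w w' y))) = 0) :
    (∀ x z : W, (Cop z) ∘ₗ (Cop x) = 0) ∧
    (∀ x y u v : W, C (Cop x y) u v = 0) ∧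
    (∀ x y : W, (Cop x) ∘ₗ (Cop y) - (Cop y) ∘ₗ (Cop x) = 0) ∧
    (∀ x a b c : W, C (Cop x a) b c + C a (Cop x b) c + C a b (Cop x c) = 0) ∧
    (∀ w x y z : W, D (Bop w) x y z = 0) := by
  have hC12 : ∀ x y z, C x y z = C y x z := fun x y z => by
    simpa [Equiv.swap_apply_def] using hC_symm ![y, x, z] (Equiv.swap 0 1)
  have hC23 : ∀ x y z, C x y z = C x z y := fun x y z => by
    simpa [Equiv.swap_apply_def] using hC_symm ![x, z, y] (Equiv.swap 1 2)
  have hD12 : ∀ x y z w, D x y z w = D y x z w := fun x y z w => by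
    simpa [Equiv.swap_apply_def] using hD_symm ![y, x, z, w] (Equiv.swap 0 1)
  have hD23 : ∀ x y z w, D x y z w = D x z y w := fun x y z w => by
    simpa [Equiv.swap_apply_def] using hD_symm ![x, z, y, w] (Equiv.swap 1 2)
  have hD34 : ∀ x y z w, D x y z w = D x y w z := fun x y z w => by
    simpa [Equiv.swap_apply_def] using hD_symm ![x, y, w, z] (Equiv.swap 2 3)
  have hanti : ∀ x y, ω x y = - ω y x := fun x y => by
    have h := hω_alt (x + y)
    simp only [map_add, LinearMap.add_apply, hω_alt] at h
    linear_combination h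
  have hBD : ∀ w w' x y, B y (Dop w w' x) = - D (Bop y) x w w' := fun w w' x y => by
    rw [← hBop, hanti, hDop, hD34 w, hD23 w, hD12 w, hD34 (Bop y), hD23 (Bop y),
      hD34 (Bop y) x]
  -- the fourth hypothesis in terms of `D (Bop _)`
  have hF : ∀ w w' x y, C (Cop w w') x y
      = -(4 / 3) * (D (Bop x) y w w' + D (Bop y) x w w') := fun w w' x y => by
    have h := hiv w w' x y
    rw [hB_symm (Dop w w' x) y, hBD, hBD] at h
    linear_combination (2 / 3) * h
  have hE : ∀ w x y z, D (Bop w) x y z = 0 := fun w x y z => by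
    have h3 := hiii w x y z
    rw [hC12 x (Cop w y) z, hC23 x y (Cop w z), hC12 x (Cop w z) y, hF, hF, hF] at h3
    have h2 := hii w x y z
    rw [hD12 w (Bop x), hD23 w x (Bop y), hD12 w (Bop y), hD34 w x y, hD23 w x (Bop z),
      hD12 w (Bop z)] at h2
    have e1 := hD12 (Bop y) z w x
    have e2 := hD23 (Bop y) z w x
    have e3 := hD34 (Bop y) w z x
    have e4 := hD23 (Bop z) y w x
    have e5 := hD34 (Bop z) w y x
    have e6 := hD23 (Bop x) z w y
    have e7 := hD34 (Bop x) w z y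
    have e8 := hD23 (Bop z) x w y
    have e9 := hD23 (Bop x) y w z
    have e10 := hD23 (Bop y) x w z
    grind
  have hF0 : ∀ x y u v, C (Cop x y) u v = 0 := fun x y u v => by
    rw [hF, hE, hE]; ring
  have hCC : ∀ x z : W, (Cop z) ∘ₗ (Cop x) = 0 := fun x z => by
    ext y
    apply hω_nd
    intro v
    rw [LinearMap.comp_apply, hCop, hC12, hF0]
  refine ⟨hCC, hF0, fun x y => by rw [hCC, hCC, sub_zero], fun x a b c => ?_, hE⟩
  rw [hC12 a (Cop x b), hC23 a b, hC12 a (Cop x c), hF0, hF0, hF0]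
  ring
end

section
/- Suppose all pairwise compositions of the associated operators vanish: B̂∘B̂ = 0, B̂∘C_x = C_x∘B̂ = 0, B̂∘D_{x,y} = D_{x,y}∘B̂ = 0, C_x∘C_y = 0, C_x∘D_{y,z} = 0 and D_{x,y}∘C_z = 0 for all x,y,z ∈ W. Then: (1) every v ∈ Σ_B + Σ_C satisfies B̂v = 0, C(v,·,·) = 0 and D(v,·,·,·) = 0; (2) every v ∈ Σ_D satisfies B̂v = 0 and C(v,·,·) = 0; (3) Σ_B + Σ_C is ω-isotropic, i.e. ω(u,v) = 0 for all u,v ∈ Σ_B + Σ_C; and (4) ω(u,v) = 0 for all u ∈ Σ_D and v ∈ Σ_B + Σ_C. -/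
/-- If all pairwise compositions of the operators `B̂`, `C_x`, `D_{x,y}` vanish, then the
supports satisfy: `Σ_B + Σ_C ⊆ ker B̂ ∩ ker C ∩ ker D`, `Σ_D ⊆ ker B̂ ∩ ker C`,
`Σ_B + Σ_C` is `ω`-isotropic, and `ω(Σ_D, Σ_B + Σ_C) = 0`. -/
theorem stmt_12 (W : Type*) [AddCommGroup W] [Module ℂ W] [FiniteDimensional ℂ W]
    (ω : W →ₗ[ℂ] W →ₗ[ℂ] ℂ)
    (hω_alt : ∀ x : W, ω x x = 0)
    (hω_nd : ∀ x : W, (∀ y : W, ω x y = 0) → x = 0)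
    (B : W → W → ℂ)
    (hB_lin : ∀ y : W, IsLinearMap ℂ (fun x => B x y))
    (hB_symm : ∀ x y : W, B x y = B y x)
    (C : W → W → W → ℂ)
    (hC_lin : ∀ y z : W, IsLinearMap ℂ (fun x => C x y z))
    (hC_symm : ∀ (v : Fin 3 → W) (σ : Equiv.Perm (Fin 3)),
      C (v (σ 0)) (v (σ 1)) (v (σ 2)) = C (v 0) (v 1) (v 2))
    (D : W → W → W → W → ℂ)
    (hD_lin : ∀ y z w : W, IsLinearMap ℂ (fun x => D x y z w))
    (hD_symm : ∀ (v : Fin 4 → W) (σ : Equiv.Perm (Fin 4)),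
      D (v (σ 0)) (v (σ 1)) (v (σ 2)) (v (σ 3)) = D (v 0) (v 1) (v 2) (v 3))
    (Bop : W →ₗ[ℂ] W)
    (hBop : ∀ x y : W, ω (Bop x) y = B x y)
    (Cop : W → W →ₗ[ℂ] W)
    (hCop : ∀ x y z : W, ω (Cop x y) z = C x y z)
    (Dop : W → W → W →ₗ[ℂ] W)
    (hDop : ∀ x y z w : W, ω (Dop x y z) w = D x y z w)
    (hBB : Bop ∘ₗ Bop = 0)
    (hBC : ∀ x : W, Bop ∘ₗ (Cop x) = 0)
    (hCB : ∀ x : W, (Cop x) ∘ₗ Bop = 0)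
    (hBD : ∀ x y : W, Bop ∘ₗ (Dop x y) = 0)
    (hDB : ∀ x y : W, (Dop x y) ∘ₗ Bop = 0)
    (hCC : ∀ x y : W, (Cop x) ∘ₗ (Cop y) = 0)
    (hCD : ∀ x y z : W, (Cop x) ∘ₗ (Dop y z) = 0)
    (hDC : ∀ x y z : W, (Dop x y) ∘ₗ (Cop z) = 0) :
    (∀ v ∈ LinearMap.range Bop ⊔ Submodule.span ℂ {v : W | ∃ x y, v = Cop x y},
      Bop v = 0 ∧ (∀ x y : W, C v x y = 0) ∧ (∀ x y z : W, D v x y z = 0)) ∧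
    (∀ v ∈ Submodule.span ℂ {v : W | ∃ x y z, v = Dop x y z},
      Bop v = 0 ∧ (∀ x y : W, C v x y = 0)) ∧
    (∀ u ∈ LinearMap.range Bop ⊔ Submodule.span ℂ {v : W | ∃ x y, v = Cop x y},
      ∀ v ∈ LinearMap.range Bop ⊔ Submodule.span ℂ {v : W | ∃ x y, v = Cop x y},
        ω u v = 0) ∧
    (∀ u ∈ Submodule.span ℂ {v : W | ∃ x y z, v = Dop x y z},
      ∀ v ∈ LinearMap.range Bop ⊔ Submodule.span ℂ {v : W | ∃ x y, v = Cop x y},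
        ω u v = 0) := by
  have hC12 : ∀ a b c, C a b c = C b a c := fun a b c => by
    simpa [Equiv.swap_apply_def] using hC_symm ![b, a, c] (Equiv.swap 0 1)
  have hC23 : ∀ a b c, C a b c = C a c b := fun a b c => by
    simpa [Equiv.swap_apply_def] using hC_symm ![a, c, b] (Equiv.swap 1 2)
  have hD13 : ∀ a b c d, D a b c d = D c b a d := fun a b c d => by
    simpa [Equiv.swap_apply_def] using hD_symm ![c, b, a, d] (Equiv.swap 0 2)
  have hD34 : ∀ a b c d, D a b c d = D a b d c := fun a b c d => by
    simpa [Equiv.swap_apply_def] using hD_symm ![a, b, d, c] (Equiv.swap 2 3)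
  -- kernels of `B`, `C` and `D` as submodules
  have hS : LinearMap.range Bop ⊔ Submodule.span ℂ {v : W | ∃ x y, v = Cop x y} ≤
      LinearMap.ker Bop ⊓ (⨅ x, LinearMap.ker (Cop x)) ⊓
        (⨅ x, ⨅ y, LinearMap.ker (Dop x y)) := by
    refine sup_le ?_ (Submodule.span_le.2 ?_)
    · rintro _ ⟨w, rfl⟩
      simp only [Submodule.mem_inf, Submodule.mem_iInf, LinearMap.mem_ker]
      exact ⟨⟨LinearMap.congr_fun hBB w, fun x => LinearMap.congr_fun (hCB x) w⟩,
        fun x y => LinearMap.congr_fun (hDB x y) w⟩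
    · rintro _ ⟨a, w, rfl⟩
      simp only [SetLike.mem_coe, Submodule.mem_inf, Submodule.mem_iInf, LinearMap.mem_ker]
      exact ⟨⟨LinearMap.congr_fun (hBC a) w, fun x => LinearMap.congr_fun (hCC x a) w⟩,
        fun x y => LinearMap.congr_fun (hDC x y a) w⟩
  have hT : Submodule.span ℂ {v : W | ∃ x y z, v = Dop x y z} ≤
      LinearMap.ker Bop ⊓ (⨅ x, LinearMap.ker (Cop x)) := by
    refine Submodule.span_le.2 ?_
    rintro _ ⟨a, b, w, rfl⟩
    simp only [SetLike.mem_coe, Submodule.mem_inf, Submodule.mem_iInf, LinearMap.mem_ker]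
    exact ⟨LinearMap.congr_fun (hBD a b) w, fun x => LinearMap.congr_fun (hCD x a b) w⟩
  have hS' : ∀ v ∈ LinearMap.range Bop ⊔ Submodule.span ℂ {v : W | ∃ x y, v = Cop x y},
      (Bop v = 0 ∧ ∀ x, Cop x v = 0) ∧ ∀ x y, Dop x y v = 0 := fun v hv => by
    simpa only [Submodule.mem_inf, Submodule.mem_iInf, LinearMap.mem_ker] using hS hv
  have hT' : ∀ v ∈ Submodule.span ℂ {v : W | ∃ x y z, v = Dop x y z},
      Bop v = 0 ∧ ∀ x, Cop x v = 0 := fun v hv => by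
    simpa only [Submodule.mem_inf, Submodule.mem_iInf, LinearMap.mem_ker] using hT hv
  refine ⟨fun v hv => ?_, fun v hv => ?_, fun u hu v hv => ?_, fun u hu v hv => ?_⟩
  · obtain ⟨⟨h1, h2⟩, h3⟩ := hS' v hv
    refine ⟨h1, fun x y => ?_, fun x y z => ?_⟩
    · rw [hC12, ← hCop, h2]; simp
    · rw [hD13, ← hDop, h3]; simp
  · obtain ⟨h1, h2⟩ := hT' v hv
    refine ⟨h1, fun x y => ?_⟩
    rw [hC12, ← hCop, h2]; simp
  · obtain ⟨⟨h1, h2⟩, h3⟩ := hS' v hv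
    have : LinearMap.range Bop ⊔ Submodule.span ℂ {v : W | ∃ x y, v = Cop x y} ≤
        LinearMap.ker (ω.flip v) := by
      refine sup_le ?_ (Submodule.span_le.2 ?_)
      · rintro _ ⟨w, rfl⟩
        rw [LinearMap.mem_ker, LinearMap.flip_apply, hBop, hB_symm, ← hBop, h1]; simp
      · rintro _ ⟨a, w, rfl⟩
        rw [SetLike.mem_coe, LinearMap.mem_ker, LinearMap.flip_apply, hCop, hC23, ← hCop, h2]
        simp
    exact this hu
  · obtain ⟨⟨h1, h2⟩, h3⟩ := hS' v hv
    have : Submodule.span ℂ {v : W | ∃ x y z, v = Dop x y z} ≤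
        LinearMap.ker (ω.flip v) := by
      refine Submodule.span_le.2 ?_
      rintro _ ⟨a, b, w, rfl⟩
      rw [SetLike.mem_coe, LinearMap.mem_ker, LinearMap.flip_apply, hDop, hD34, ← hDop, h3]
      simp
    exact this hu
end

section
/- There exists a j-invariant Lagrangian subspace E₊ ⊆ E (i.e. a Lagrangian subspace with j(E₊) = E₊) if and only if dim_ℂ E is divisible by 4 and the Hermitian form γ vanishes identically on some complex subspace of E of dimension (dim_ℂ E)/2 (i.e. γ has split signature). -/
/-- A complex space with a quaternionic structure has even dimension. -/
theorem quat_even (E : Type*) [AddCommGroup E] [Module ℂ E] [FiniteDimensional ℂ E]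
    (J : E →ₛₗ[starRingEnd ℂ] E) (hJ : ∀ x, J (J x) = -x) : Even (Module.finrank ℂ E) := by
  let b := Module.finBasis ℂ E
  let A : Matrix (Fin (Module.finrank ℂ E)) (Fin (Module.finrank ℂ E)) ℂ :=
    Matrix.of fun i k => b.repr (J (b k)) i
  have h1 : ∀ k, J (b k) = ∑ i, A i k • b i := fun k => (b.sum_repr (J (b k))).symm
  have h : A * (A.map (starRingEnd ℂ)) = -1 := by
    ext i k
    have h2 : J (J (b k)) = -b k := hJ _
    rw [h1 k, map_sum] at h2
    have h3 := congrArg (fun v => b.repr v i) h2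
    simp only [map_smulₛₗ, map_sum, map_neg, Finsupp.coe_finset_sum, Finset.sum_apply,
      Finsupp.neg_apply, Module.Basis.repr_self, Finsupp.smul_apply, RingHom.id_apply,
      smul_eq_mul] at h3
    rw [Matrix.mul_apply]
    simp only [Matrix.map_apply, Matrix.neg_apply, Matrix.one_apply]
    rw [Finsupp.single_apply] at h3
    simp only [eq_comm (a := i) (b := k)]
    rw [← h3]
    exact Finset.sum_congr rfl fun l _ => mul_comm _ _
  have hd := congrArg Matrix.det h
  rw [Matrix.det_mul, Matrix.det_neg, Matrix.det_one, mul_one, Fintype.card_fin] at hd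
  have hm : (A.map (starRingEnd ℂ)).det = (starRingEnd ℂ) A.det :=
    (RingHom.map_det (starRingEnd ℂ) A).symm
  rw [hm, Complex.mul_conj] at hd
  by_contra ho
  rw [Nat.not_even_iff_odd] at ho
  rw [ho.neg_one_pow] at hd
  have h5 : Complex.normSq A.det = -1 := by exact_mod_cast hd
  linarith [Complex.normSq_nonneg A.det]

theorem quat_comap (E : Type*) [AddCommGroup E] [Module ℂ E]
    (J : E →ₛₗ[starRingEnd ℂ] E) (hJ : ∀ x, J (J x) = -x) (N : Submodule ℂ E) :
    Module.finrank ℂ (N.comap J) = Module.finrank ℂ N := by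
  let e : (N.comap J) ≃+ N :=
    { toFun := fun x => ⟨J x.1, x.2⟩
      invFun := fun y => ⟨-J y.1, by simp [hJ]⟩
      left_inv := fun x => by ext; simp [hJ]
      right_inv := fun x => by ext; simp [hJ]
      map_add' := fun x y => by ext; simp }
  unfold Module.finrank
  rw [rank_eq_of_equiv_equiv (starRingEnd ℂ) e (RingEquiv.bijective (starRingAut (R := ℂ)))
    (fun r m => by ext; simp [e])]

/-- There exists a `j`-invariant Lagrangian subspace `E₊ ⊆ E` if and only if
`dim_ℂ E` is divisible by 4 and the Hermitian form `γ(x,y) = ω(x,jy)` vanishes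
identically on some complex subspace of dimension `(dim_ℂ E)/2` (split signature). -/
theorem stmt_14 (E : Type*) [AddCommGroup E] [Module ℂ E] [FiniteDimensional ℂ E]
    (ω : E →ₗ[ℂ] E →ₗ[ℂ] ℂ)
    (hω_alt : ∀ x : E, ω x x = 0)
    (hω_nd : ∀ x : E, (∀ y : E, ω x y = 0) → x = 0)
    (j : E → E)
    (hj_add : ∀ x y : E, j (x + y) = j x + j y)
    (hj_smul : ∀ (c : ℂ) (x : E), j (c • x) = (starRingEnd ℂ c) • j x)
    (hjj : ∀ x : E, j (j x) = -x)
    (hjω : ∀ x y : E, ω (j x) (j y) = starRingEnd ℂ (ω x y)) :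
    (∃ Eplus : Submodule ℂ E,
        (∀ x ∈ Eplus, ∀ y ∈ Eplus, ω x y = 0) ∧
        Module.finrank ℂ Eplus = Module.finrank ℂ E / 2 ∧
        j '' (Eplus : Set E) = (Eplus : Set E)) ↔
    (4 ∣ Module.finrank ℂ E ∧
      ∃ N : Submodule ℂ E,
        Module.finrank ℂ N = Module.finrank ℂ E / 2 ∧
        ∀ x ∈ N, ∀ y ∈ N, ω x (j y) = 0) := by
  have hskew : ∀ x y, ω x y = -ω y x := fun x y => by
    have h := hω_alt (x + y)
    simp only [map_add, LinearMap.add_apply, hω_alt, zero_add, add_zero] at h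
    exact eq_neg_of_add_eq_zero_right h
  let J : E →ₛₗ[starRingEnd ℂ] E := { toFun := j, map_add' := hj_add, map_smul' := hj_smul }
  have hJJ : ∀ x, J (J x) = -x := hjj
  have hJω : ∀ x y, ω (J x) (J y) = starRingEnd ℂ (ω x y) := hjω
  have hE := quat_even E J hJJ
  constructor
  · rintro ⟨W, hW, hd, hj⟩
    have hJW : ∀ x ∈ W, J x ∈ W := fun x hx => by
      have : j x ∈ j '' (W : Set E) := ⟨x, hx, rfl⟩
      rw [hj] at this
      exact this
    have h2 := quat_even W
      { toFun := fun x => ⟨J x.1, hJW _ x.2⟩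
        map_add' := fun x y => by ext; simp
        map_smul' := fun c x => by ext; simp } (fun x => by ext; simp [hJJ])
    refine ⟨?_, W, hd, fun x hx y hy => hW x hx _ (hJW y hy)⟩
    obtain ⟨a, ha⟩ := hE
    obtain ⟨c, hc⟩ := h2
    omega
  · rintro ⟨-, N, hNd, hN⟩
    let P : Submodule ℂ E → Prop := fun W =>
      (∀ x ∈ W, ∀ y ∈ W, ω x y = 0) ∧ ∀ x ∈ W, J x ∈ W
    obtain ⟨W, ⟨hW, hJW⟩, hmax⟩ : ∃ W, P W ∧ ∀ W', P W' → ¬ W < W' := by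
      obtain ⟨W, h1, h2⟩ := (wellFounded_gt (α := Submodule ℂ E)).has_min {W | P W}
        ⟨⊥, by
          refine ⟨fun x hx y hy => ?_, fun x hx => ?_⟩
          · rw [(Submodule.mem_bot ℂ).1 hx]; simp
          · rw [(Submodule.mem_bot ℂ).1 hx]; simp⟩
      exact ⟨W, h1, h2⟩
    have key : ∀ x, (∀ w ∈ W, ω w x = 0) → ω x (J x) = 0 → x ∈ W := by
      intro x hx hxx
      by_contra hxW
      have hwJ : ∀ w ∈ W, ω w (J x) = 0 := fun w hw => by
        have h := hJω (J w) x
        rw [hx _ (hJW w hw), hJJ] at h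
        simpa using h
      refine hmax (W ⊔ Submodule.span ℂ {x, J x}) ⟨?_, ?_⟩ ?_
      · intro u hu v hv
        obtain ⟨w, hw, s, hs, rfl⟩ := Submodule.mem_sup.1 hu
        obtain ⟨w', hw', s', hs', rfl⟩ := Submodule.mem_sup.1 hv
        obtain ⟨a, c, rfl⟩ := Submodule.mem_span_pair.1 hs
        obtain ⟨a', c', rfl⟩ := Submodule.mem_span_pair.1 hs'
        have e1 : ω x w' = 0 := by rw [hskew, hx w' hw', neg_zero]
        have e2 : ω (J x) w' = 0 := by rw [hskew, hwJ w' hw', neg_zero]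
        have e3 : ω (J x) x = 0 := by rw [hskew, hxx, neg_zero]
        simp [hW w hw w' hw', hx w hw, hwJ w hw, e1, e2, e3, hxx, hω_alt]
      · intro u hu
        obtain ⟨w, hw, s, hs, rfl⟩ := Submodule.mem_sup.1 hu
        obtain ⟨a, c, rfl⟩ := Submodule.mem_span_pair.1 hs
        rw [map_add]
        refine Submodule.add_mem_sup (hJW w hw) (Submodule.mem_span_pair.2
          ⟨-(starRingEnd ℂ c), starRingEnd ℂ a, ?_⟩)
        simp [map_smulₛₗ, hJJ, add_comm]
      · refine lt_of_le_of_ne le_sup_left fun h => hxW ?_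
        rw [h]
        exact Submodule.mem_sup_right (Submodule.subset_span (by simp))
    have hnd : LinearMap.BilinForm.Nondegenerate ω := by
      refine ⟨hω_nd, fun y hy => hω_nd y fun x => ?_⟩
      rw [hskew, hy x, neg_zero]
    have horth := fun S : Submodule ℂ E => LinearMap.BilinForm.finrank_orthogonal hnd S
    have hNo : N.comap J = LinearMap.BilinForm.orthogonal ω N := by
      refine Submodule.eq_of_le_of_finrank_eq ?_ ?_
      · intro x hx n hn
        have h := hN n hn (J x) hx
        change ω n (J (J x)) = 0 at h
        rw [hJJ] at h
        simpa using h
      · rw [quat_comap E J hJJ, horth, hNd]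
        obtain ⟨a, ha⟩ := hE
        omega
    have hle : LinearMap.BilinForm.orthogonal ω (N ⊔ W) ≤ (N ⊓ W).comap J := by
      intro x hx
      have hxN : J x ∈ N := by
        have : x ∈ N.comap J := by
          rw [hNo]
          exact fun n hn => hx n (Submodule.mem_sup_left hn)
        exact this
      refine ⟨hxN, key _ (fun w hw => ?_) (hN _ hxN _ hxN)⟩
      have h1 : ω (J w) x = 0 := hx (J w) (Submodule.mem_sup_right (hJW w hw))
      have h := hJω (J w) x
      rw [h1, hJJ] at h
      simpa using h
    have d1 := Submodule.finrank_mono hle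
    rw [quat_comap E J hJJ, horth] at d1
    have d2 := Submodule.finrank_sup_add_finrank_inf_eq N W
    have d3 : Module.finrank ℂ W ≤ _ := Submodule.finrank_mono
      (show W ≤ LinearMap.BilinForm.orthogonal ω W from fun x hx w hw => hW w hw x hx)
    rw [horth] at d3
    have d4 := Submodule.finrank_le W
    refine ⟨W, hW, by omega, ?_⟩
    ext x
    constructor
    · rintro ⟨y, hy, rfl⟩
      exact hJW y hy
    · intro hx
      exact ⟨-J x, W.neg_mem (hJW x hx), by
        change J (-J x) = x
        rw [map_neg, hJJ, neg_neg]⟩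
end

section
/- Let j : E → E be an antilinear map with j∘j = −Id. Then for every symmetric quadrilinear form S on E, the ℂ-linear span of {S_{jx,y} − S_{x,jy} : x,y ∈ E} equals the ℂ-linear span of {S_{x,y} : x,y ∈ E}. Explicitly, for all e,e' ∈ E, setting e'' = −je, one has S_{e,e'} = (1/2)·(S_{je'',e'} − S_{e'',je'}) − (i/2)·(S_{je'',i e'} − S_{e'',j(i e')}). -/
/-- For an antilinear `j` with `j² = −Id`, the span of `{S_{jx,y} − S_{x,jy}}` equals
the span of `{S_{x,y}}`; explicitly, with `e'' = −je`,
`S_{e,e'} = ½(S_{je'',e'} − S_{e'',je'}) − (i/2)(S_{je'',ie'} − S_{e'',j(ie')})`. -/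
theorem stmt_16 (E : Type*) [AddCommGroup E] [Module ℂ E] [FiniteDimensional ℂ E]
    (ω : E →ₗ[ℂ] E →ₗ[ℂ] ℂ)
    (hω_alt : ∀ x : E, ω x x = 0)
    (hω_nd : ∀ x : E, (∀ y : E, ω x y = 0) → x = 0)
    (S : E → E → E → E → ℂ)
    (hS_lin : ∀ y z w : E, IsLinearMap ℂ (fun x => S x y z w))
    (hS_symm : ∀ (v : Fin 4 → E) (σ : Equiv.Perm (Fin 4)),
      S (v (σ 0)) (v (σ 1)) (v (σ 2)) (v (σ 3)) = S (v 0) (v 1) (v 2) (v 3))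
    (Sop : E → E → E →ₗ[ℂ] E)
    (hSop : ∀ e e' x y : E, ω (Sop e e' x) y = S e e' x y)
    (j : E → E)
    (hj_add : ∀ x y : E, j (x + y) = j x + j y)
    (hj_smul : ∀ (c : ℂ) (x : E), j (c • x) = (starRingEnd ℂ c) • j x)
    (hjj : ∀ x : E, j (j x) = -x) :
    Submodule.span ℂ {A : E →ₗ[ℂ] E | ∃ x y, A = Sop (j x) y - Sop x (j y)}
      = Submodule.span ℂ {A : E →ₗ[ℂ] E | ∃ x y, A = Sop x y} ∧
    (∀ e e' : E,
      Sop e e'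
        = (1 / 2 : ℂ) • (Sop (j (-(j e))) e' - Sop (-(j e)) (j e'))
          - (Complex.I / 2) • (Sop (j (-(j e))) (Complex.I • e')
              - Sop (-(j e)) (j (Complex.I • e')))) := by
  have inj : ∀ A B : E →ₗ[ℂ] E, (∀ x y, ω (A x) y = ω (B x) y) → A = B := by
    intro A B h
    ext x
    refine sub_eq_zero.mp (hω_nd _ fun y => ?_)
    rw [map_sub, LinearMap.sub_apply, h, sub_self]
  have hS2 : ∀ a b z w : E, S a b z w = S b a z w := by
    intro a b z w
    have h := hS_symm ![b, a, z, w] (Equiv.swap 0 1)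
    have h2 : (Equiv.swap (0 : Fin 4) 1) 2 = 2 := by decide
    have h3 : (Equiv.swap (0 : Fin 4) 1) 3 = 3 := by decide
    rw [Equiv.swap_apply_left, Equiv.swap_apply_right, h2, h3] at h
    simpa using h
  have comm : ∀ a b : E, Sop a b = Sop b a := by
    intro a b
    apply inj
    intro x y
    rw [hSop, hSop, hS2]
  have smul1 : ∀ (c : ℂ) (a b : E), Sop (c • a) b = c • Sop a b := by
    intro c a b
    apply inj
    intro x y
    rw [hSop, LinearMap.smul_apply, map_smul, LinearMap.smul_apply, hSop]
    exact (hS_lin b x y).map_smul c a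
  have smul2 : ∀ (c : ℂ) (a b : E), Sop a (c • b) = c • Sop a b := by
    intro c a b
    rw [comm, smul1, comm]
  have neg1 : ∀ a b : E, Sop (-a) b = - Sop a b := by
    intro a b
    have h := smul1 (-1) a b
    simpa using h
  have hjneg : ∀ a : E, j (-a) = - j a := by
    intro a
    have h := hj_smul (-1) a
    simpa using h
  have key : ∀ e e' : E,
      Sop e e'
        = (1 / 2 : ℂ) • (Sop (j (-(j e))) e' - Sop (-(j e)) (j e'))
          - (Complex.I / 2) • (Sop (j (-(j e))) (Complex.I • e')
              - Sop (-(j e)) (j (Complex.I • e'))) := by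
    intro e e'
    have hI : Complex.I * Complex.I = -1 := Complex.I_mul_I
    rw [hjneg, hjj, neg_neg, hj_smul, Complex.conj_I, smul2, smul2, neg1]
    match_scalars
    · linear_combination (1 / 2 : ℂ) * hI
    · linear_combination (-1 / 2 : ℂ) * hI
  refine ⟨le_antisymm ?_ ?_, key⟩
  · rw [Submodule.span_le]
    rintro A ⟨x, y, rfl⟩
    exact Submodule.sub_mem _ (Submodule.subset_span ⟨_, _, rfl⟩)
      (Submodule.subset_span ⟨_, _, rfl⟩)
  · rw [Submodule.span_le]
    rintro A ⟨x, y, rfl⟩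
    rw [key x y]
    exact Submodule.sub_mem _
      (Submodule.smul_mem _ _ (Submodule.subset_span ⟨_, _, rfl⟩))
      (Submodule.smul_mem _ _ (Submodule.subset_span ⟨_, _, rfl⟩))
end

section
/- If dim_ℂ E = 2 and the symmetric quadrilinear form S satisfies the invariance condition, then there exist c ∈ ℂ and e ∈ E such that S(x₁,x₂,x₃,x₄) = c·ω(x₁,e)·ω(x₂,e)·ω(x₃,e)·ω(x₄,e) for all x₁,x₂,x₃,x₄ ∈ E. (This is the algebraic content of the statement that, up to isomorphism, there is exactly one non-flat simply connected complex hyper-Kähler symmetric space of dimension 4, namely the one associated with the quartic S = e⁴.) -/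
/-- If `dim_ℂ E = 2` and the symmetric quadrilinear form `S` satisfies the invariance
condition, then `S = c · ω(·,e)⁴` for some `c ∈ ℂ` and `e ∈ E`, i.e. `S` is a fourth
power `e⁴` of a vector up to scale: the unique non-flat simply connected complex
hyper-Kähler symmetric space of dimension 4. -/
theorem stmt_17 (E : Type*) [AddCommGroup E] [Module ℂ E] [FiniteDimensional ℂ E]
    (ω : E →ₗ[ℂ] E →ₗ[ℂ] ℂ)
    (hω_alt : ∀ x : E, ω x x = 0)
    (hω_nd : ∀ x : E, (∀ y : E, ω x y = 0) → x = 0)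
    (hdim : Module.finrank ℂ E = 2)
    (S : E → E → E → E → ℂ)
    (hS_lin : ∀ y z w : E, IsLinearMap ℂ (fun x => S x y z w))
    (hS_symm : ∀ (v : Fin 4 → E) (σ : Equiv.Perm (Fin 4)),
      S (v (σ 0)) (v (σ 1)) (v (σ 2)) (v (σ 3)) = S (v 0) (v 1) (v 2) (v 3))
    (Sop : E → E → E →ₗ[ℂ] E)
    (hSop : ∀ e e' x y : E, ω (Sop e e' x) y = S e e' x y)
    (hinv : ∀ e e' x₁ x₂ x₃ x₄ : E,
      S (Sop e e' x₁) x₂ x₃ x₄ + S x₁ (Sop e e' x₂) x₃ x₄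
        + S x₁ x₂ (Sop e e' x₃) x₄ + S x₁ x₂ x₃ (Sop e e' x₄) = 0) :
    ∃ (c : ℂ) (e : E), ∀ x₁ x₂ x₃ x₄ : E,
      S x₁ x₂ x₃ x₄ = c * ω x₁ e * ω x₂ e * ω x₃ e * ω x₄ e := by
  have anti : ∀ x y : E, ω y x = - ω x y := by
    intro x y
    have h := hω_alt (x + y)
    simp only [map_add, LinearMap.add_apply, hω_alt] at h
    linear_combination h
  -- a symplectic basis
  obtain ⟨p, q, hpq⟩ : ∃ p q : E, ω p q = 1 := by
    haveI : Nontrivial E := Module.nontrivial_of_finrank_pos (R := ℂ) (by omega)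
    obtain ⟨p, hp⟩ := exists_ne (0 : E)
    have : ∃ y, ω p y ≠ 0 := by
      by_contra hcon
      push Not at hcon
      exact hp (hω_nd p hcon)
    obtain ⟨y, hy⟩ := this
    exact ⟨p, (ω p y)⁻¹ • y, by simp [hy]⟩
  have hqp : ω q p = -1 := by rw [anti p q, hpq]
  have hli : LinearIndependent ℂ ![p, q] := by
    rw [LinearIndependent.pair_iff]
    intro s t h
    have h1 := congrArg (fun z => ω z q) h
    have h2 := congrArg (fun z => ω z p) h
    simp [hpq, hqp, hω_alt] at h1 h2
    exact ⟨h1, h2⟩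
  have hdec : ∀ x : E, x = ω x q • p + (-ω x p) • q := by
    intro x
    have hspan := hli.span_eq_top_of_card_eq_finrank (by simp [hdim])
    have hx : x ∈ Submodule.span ℂ (Set.range ![p, q]) := by rw [hspan]; trivial
    rw [Matrix.range_cons, Matrix.range_cons, Matrix.range_empty, Set.union_empty,
      Set.singleton_union, Submodule.mem_span_pair] at hx
    obtain ⟨a, b, rfl⟩ := hx
    simp [hpq, hqp, hω_alt]
  -- symmetries
  have s12 : ∀ x y z w, S x y z w = S y x z w := fun x y z w => by
    have := hS_symm ![y, x, z, w] (Equiv.swap 0 1)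
    simpa [Equiv.swap_apply_def] using this
  have s23 : ∀ x y z w, S x y z w = S x z y w := fun x y z w => by
    have := hS_symm ![x, z, y, w] (Equiv.swap 1 2)
    simpa [Equiv.swap_apply_def] using this
  have s34 : ∀ x y z w, S x y z w = S x y w z := fun x y z w => by
    have := hS_symm ![x, y, w, z] (Equiv.swap 2 3)
    simpa [Equiv.swap_apply_def] using this
  have l1 : ∀ x y z w, S x y z w = ω x q * S p y z w - ω x p * S q y z w := by
    intro x y z w
    have ha := (hS_lin y z w).map_add (ω x q • p) ((-ω x p) • q)
    have hb := (hS_lin y z w).map_smul (ω x q) p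
    have hc := (hS_lin y z w).map_smul (-ω x p) q
    simp only [smul_eq_mul] at ha hb hc
    rw [← hdec x] at ha
    rw [ha, hb, hc]; ring
  have l2 : ∀ x y z w, S x y z w = ω y q * S x p z w - ω y p * S x q z w := by
    intro x y z w
    rw [s12, l1, s12 p, s12 q]
  have l3 : ∀ x y z w, S x y z w = ω z q * S x y p w - ω z p * S x y q w := by
    intro x y z w
    rw [s23, l2, s23 x p, s23 x q]
  have l4 : ∀ x y z w, S x y z w = ω w q * S x y z p - ω w p * S x y z q := by
    intro x y z w
    rw [s34, l3, s34 x y p, s34 x y q]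
  -- normal forms of the components
  have n1 : S q p p p = S p p p q := by rw [s12, s23, s34]
  have n2 : S p q p p = S p p p q := by rw [s23, s34]
  have n3 : S p p q p = S p p p q := by rw [s34]
  have m1 : S q q p p = S p p q q := by rw [s23, s12, s34, s23]
  have m2 : S q p q p = S p p q q := by rw [s12, s34, s23]
  have m3 : S q p p q = S p p q q := by rw [s12, s23]
  have m4 : S p q q p = S p p q q := by rw [s34, s23]
  have m5 : S p q p q = S p p q q := by rw [s23]
  have k1 : S q q q p = S p q q q := by rw [s34, s23, s12]
  have k2 : S q q p q = S p q q q := by rw [s23, s12]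
  have k3 : S q p q q = S p q q q := by rw [s12]
  have inv : ∀ e e' x₁ x₂ x₃ x₄ : E,
      (S e e' x₁ q * S p x₂ x₃ x₄ - S e e' x₁ p * S q x₂ x₃ x₄)
      + (S e e' x₂ q * S x₁ p x₃ x₄ - S e e' x₂ p * S x₁ q x₃ x₄)
      + (S e e' x₃ q * S x₁ x₂ p x₄ - S e e' x₃ p * S x₁ x₂ q x₄)
      + (S e e' x₄ q * S x₁ x₂ x₃ p - S e e' x₄ p * S x₁ x₂ x₃ q) = 0 := by
    intro e e' x₁ x₂ x₃ x₄
    have h := hinv e e' x₁ x₂ x₃ x₄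
    rw [l1 (Sop e e' x₁), l2 _ (Sop e e' x₂), l3 _ _ (Sop e e' x₃),
      l4 _ _ _ (Sop e e' x₄)] at h
    simpa only [hSop] using h
  have E1 := inv p p p p p q
  have E2 := inv p q p p p q
  have E3 := inv q q p p p q
  have E4 := inv q q p q q q
  have full : ∀ x₁ x₂ x₃ x₄ : E, S x₁ x₂ x₃ x₄ =
      ω x₁ q * (ω x₂ q * (ω x₃ q * (ω x₄ q * S p p p p - ω x₄ p * S p p p q)
          - ω x₃ p * (ω x₄ q * S p p p q - ω x₄ p * S p p q q))
        - ω x₂ p * (ω x₃ q * (ω x₄ q * S p p p q - ω x₄ p * S p p q q)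
          - ω x₃ p * (ω x₄ q * S p p q q - ω x₄ p * S p q q q)))
      - ω x₁ p * (ω x₂ q * (ω x₃ q * (ω x₄ q * S p p p q - ω x₄ p * S p p q q)
          - ω x₃ p * (ω x₄ q * S p p q q - ω x₄ p * S p q q q))
        - ω x₂ p * (ω x₃ q * (ω x₄ q * S p p q q - ω x₄ p * S p q q q)
          - ω x₃ p * (ω x₄ q * S p q q q - ω x₄ p * S q q q q))) := by
    intro x₁ x₂ x₃ x₄
    rw [l1 x₁, l2 p x₂, l2 q x₂, l3 p p x₃, l3 p q x₃, l3 q p x₃, l3 q q x₃,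
      l4 p p p x₄, l4 p p q x₄, l4 p q p x₄, l4 p q q x₄,
      l4 q p p x₄, l4 q p q x₄, l4 q q p x₄, l4 q q q x₄]
    simp only [n1, n2, n3, m1, m2, m3, m4, m5, k1, k2, k3]
  simp only [n1, n2, n3, m1, m2, m3, m4, m5, k1, k2, k3] at E1 E2 E3 E4
  generalize S p p p p = a0 at *
  generalize S p p p q = a1 at *
  generalize S p p q q = a2 at *
  generalize S p q q q = a3 at *
  generalize S q q q q = a4 at *
  have F1 : a1 ^ 2 = a0 * a2 := by linear_combination (1 / 2) * E1
  have F2 : a0 * a3 = a1 * a2 := by linear_combination E2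
  have F3 : 2 * a3 * a1 - 3 * a2 ^ 2 + a4 * a0 = 0 := by linear_combination E3
  have F4 : a3 ^ 2 = a2 * a4 := by linear_combination (-1 / 2) * E4
  by_cases h0 : a0 = 0
  · subst h0
    have z1 : a1 = 0 := by simpa using F1
    subst z1
    have z2 : a2 = 0 := by simpa using F3
    subst z2
    have z3 : a3 = 0 := by simpa using F4
    subst z3
    refine ⟨a4, p, fun x₁ x₂ x₃ x₄ => ?_⟩
    rw [full]; ring
  · obtain ⟨t, rfl⟩ : ∃ t, a1 = a0 * t := ⟨a1 / a0, by field_simp⟩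
    have z2 : a2 = a0 * t ^ 2 := mul_left_cancel₀ h0 (by linear_combination -F1)
    subst z2
    have z3 : a3 = a0 * t ^ 3 := mul_left_cancel₀ h0 (by linear_combination F2)
    subst z3
    have z4 : a4 = a0 * t ^ 4 := mul_left_cancel₀ h0 (by linear_combination F3)
    subst z4
    refine ⟨a0, q - t • p, fun x₁ x₂ x₃ x₄ => ?_⟩
    rw [full]
    simp only [map_sub, map_smul, smul_eq_mul]
    ring
end
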